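/- arXiv:2208.06769 — 2 statements merged into one kernel-verified Lean document; each statement's English description precedes it below -/
import Mathlib

section
/- Let γ > 1 and ρ₀ > 0. For ρ₁ > ρ₀ define v₁(ρ₁) = (ρ₁ − ρ₀)√(2(ρ₁^{γ−1} − ρ₀^{γ−1})/(ρ₁² − ρ₀²)) and the sonic speed of state (1) by c₁(ρ₁) = ρ₁^{(γ−1)/2}. Then there exists ρ^c > ρ₀ such that for all ρ₁ > ρ₀: v₁(ρ₁) ≤ c₁(ρ₁) if ρ₁ ∈ (ρ₀, ρ^c], and v₁(ρ₁) > c₁(ρ₁) if ρ₁ ∈ (ρ^c, ∞). -/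
/-!
Let `M = v₁ / c₁` be the Mach number of state (1). Dividing the squares gives
`M² = 2 · (ρ₁ - ρ₀) / (ρ₁ + ρ₀) · (1 - (ρ₀ / ρ₁) ^ (γ - 1))`, in which both factors vanish at
`ρ₁ = ρ₀`, are strictly increasing, and tend to `1` at infinity. Hence `M²` increases strictly
from `0` to `2`, and `ρᶜ` is the only density at which it takes the value `1`.
-/

open Filter Set Topology

/-- The velocity `v₁` behind a shock that compresses a gas at rest from density `r` to density `x`,
where `p = γ - 1` for the adiabatic exponent `γ`. -/
noncomputable def downstreamVelocity (p r x : ℝ) : ℝ :=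
  (x - r) * √(2 * (x ^ p - r ^ p) / (x ^ 2 - r ^ 2))

/-- The squared Mach number `v₁² / c₁²` of the state behind the shock, where `c₁ = x ^ (p / 2)`.
The common factor `x - r` in `v₁²` has been cancelled, so that the formula is continuous also at
`x = r`. -/
noncomputable def machSq (p r x : ℝ) : ℝ := 2 * ((x - r) / (x + r) * (1 - (r / x) ^ p))

section

variable {p r x : ℝ}

lemma machSq_self (p r : ℝ) : machSq p r r = 0 := by
  simp [machSq]

lemma strictMonoOn_sub_div_add (hr : 0 < r) :
    StrictMonoOn (fun x ↦ (x - r) / (x + r)) (Ioi (-r)) := by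
  intro x hx y hy hxy
  rw [mem_Ioi] at hx hy
  rw [div_lt_div_iff₀ (by linarith) (by linarith)]
  linear_combination 2 * r * hxy

lemma strictMonoOn_one_sub_div_rpow (hp : 0 < p) (hr : 0 < r) :
    StrictMonoOn (fun x ↦ 1 - (r / x) ^ p) (Ioi 0) := fun _ hx _ hy hxy ↦
  sub_lt_sub_left
    (Real.rpow_lt_rpow (div_pos hr hy).le (div_lt_div_of_pos_left hr hx hxy) hp) 1

lemma strictMonoOn_machSq (hp : 0 < p) (hr : 0 < r) : StrictMonoOn (machSq p r) (Ici r) := by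
  intro x hx y hy hxy
  have hx₀ : 0 < x := hr.trans_le hx
  have hy₀ : 0 < y := hr.trans_le hy
  have hsub : 0 ≤ (x - r) / (x + r) := div_nonneg (sub_nonneg.2 hx) (by positivity)
  have hrpow : 0 ≤ 1 - (r / x) ^ p :=
    sub_nonneg.2 <| Real.rpow_le_one (by positivity) ((div_le_one hx₀).2 hx) hp.le
  refine mul_lt_mul_of_pos_left (mul_lt_mul'' ?_ ?_ hsub hrpow) two_pos
  · exact strictMonoOn_sub_div_add hr (mem_Ioi.2 (by linarith)) (mem_Ioi.2 (by linarith)) hxy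
  · exact strictMonoOn_one_sub_div_rpow hp hr hx₀ hy₀ hxy

lemma continuousOn_machSq (hp : 0 ≤ p) (hr : 0 ≤ r) : ContinuousOn (machSq p r) (Ioi 0) := by
  have hadd : ∀ x ∈ Ioi (0 : ℝ), x + r ≠ 0 := fun x hx ↦ (add_pos_of_pos_of_nonneg hx hr).ne'
  have hquot : ContinuousOn (fun x ↦ (x - r) / (x + r)) (Ioi 0) := by
    fun_prop (disch := assumption)
  have hdiv : ContinuousOn (fun x ↦ r / x) (Ioi 0) :=
    continuousOn_const.div continuousOn_id fun _ hx ↦ (mem_Ioi.1 hx).ne'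
  have hrpow : ContinuousOn (fun x ↦ (r / x) ^ p) (Ioi 0) := hdiv.rpow_const fun _ _ ↦ .inr hp
  exact continuousOn_const.mul (hquot.mul (continuousOn_const.sub hrpow))

lemma tendsto_sub_div_add_atTop (r : ℝ) :
    Tendsto (fun x ↦ (x - r) / (x + r)) atTop (𝓝 1) := by
  have hlim : Tendsto (fun x ↦ 1 - 2 * r / (x + r)) atTop (𝓝 (1 - 0)) :=
    ((tendsto_atTop_add_const_right _ r tendsto_id).const_div_atTop (2 * r)).const_sub 1
  rw [sub_zero] at hlim
  refine hlim.congr' ?_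
  filter_upwards [eventually_gt_atTop (-r)] with x hx
  have hne : x + r ≠ 0 := by linarith
  field_simp
  ring

lemma tendsto_div_rpow_atTop (hp : 0 < p) (r : ℝ) :
    Tendsto (fun x ↦ (r / x) ^ p) atTop (𝓝 0) := by
  simpa only [Real.zero_rpow hp.ne', id] using
    (tendsto_id.const_div_atTop r).rpow_const (.inr hp.le)

lemma tendsto_machSq_atTop (hp : 0 < p) (r : ℝ) : Tendsto (machSq p r) atTop (𝓝 2) := by
  unfold machSq
  simpa only [sub_zero, mul_one] using
    ((tendsto_sub_div_add_atTop r).mul ((tendsto_div_rpow_atTop hp r).const_sub 1)).const_mul 2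

lemma Ico_subset_image_machSq (hp : 0 < p) (hr : 0 < r) : Ico 0 2 ⊆ machSq p r '' Ici r := by
  rw [← machSq_self p r]
  exact isPreconnected_Ici.intermediate_value_Ico self_mem_Ici
    (le_principal_iff.2 (Ici_mem_atTop r))
    ((continuousOn_machSq hp.le hr.le).mono (Ici_subset_Ioi.2 hr)) (tendsto_machSq_atTop hp r)

lemma downstreamVelocity_eq_sqrt_machSq_mul (p : ℝ) (hr : 0 ≤ r) (hx : r < x) :
    downstreamVelocity p r x = √(machSq p r x) * x ^ (p / 2) := by
  have hx₀ : 0 < x := hr.trans_lt hx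
  have hxp : 0 < x ^ p := Real.rpow_pos_of_pos hx₀ p
  have hsub : 0 < x - r := sub_pos.2 hx
  have hsquares :
      (x - r) ^ 2 * (2 * (x ^ p - r ^ p) / (x ^ 2 - r ^ 2)) = machSq p r x * x ^ p := by
    rw [machSq, Real.div_rpow hr hx₀.le, sq_sub_sq]
    field_simp
  have hsqrt : √(x ^ p) = x ^ (p / 2) := by
    rw [Real.sqrt_eq_rpow, ← Real.rpow_mul hx₀.le, mul_one_div]
  rw [downstreamVelocity, ← hsqrt, ← Real.sqrt_mul' _ hxp.le, ← hsquares,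
    Real.sqrt_mul (sq_nonneg _), Real.sqrt_sq hsub.le]

lemma downstreamVelocity_le_rpow_iff (p : ℝ) (hr : 0 ≤ r) (hx : r < x) :
    downstreamVelocity p r x ≤ x ^ (p / 2) ↔ machSq p r x ≤ 1 := by
  rw [downstreamVelocity_eq_sqrt_machSq_mul p hr hx,
    mul_le_iff_le_one_left (Real.rpow_pos_of_pos (hr.trans_lt hx) _), Real.sqrt_le_one]

end

/-- For `γ > 1`, `ρ₀ > 0`, with
`v₁(ρ₁) = (ρ₁ − ρ₀)√(2(ρ₁^{γ−1} − ρ₀^{γ−1})/(ρ₁² − ρ₀²))` and `c₁(ρ₁) = ρ₁^{(γ−1)/2}`,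
there exists `ρᶜ > ρ₀` with `v₁(ρ₁) ≤ c₁(ρ₁)` for `ρ₁ ∈ (ρ₀, ρᶜ]` and `v₁(ρ₁) > c₁(ρ₁)`
for `ρ₁ ∈ (ρᶜ, ∞)`. -/
theorem statement12 (γ ρ₀ : ℝ) (hγ : 1 < γ) (hρ₀ : 0 < ρ₀) :
    ∃ ρc : ℝ, ρ₀ < ρc ∧ ∀ ρ₁ : ℝ, ρ₀ < ρ₁ →
      ((ρ₁ ≤ ρc →
        (ρ₁ - ρ₀) * Real.sqrt (2 * (ρ₁ ^ (γ - 1) - ρ₀ ^ (γ - 1)) / (ρ₁ ^ 2 - ρ₀ ^ 2))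
          ≤ ρ₁ ^ ((γ - 1) / 2)) ∧
       (ρc < ρ₁ →
        ρ₁ ^ ((γ - 1) / 2)
          < (ρ₁ - ρ₀) * Real.sqrt (2 * (ρ₁ ^ (γ - 1) - ρ₀ ^ (γ - 1)) / (ρ₁ ^ 2 - ρ₀ ^ 2)))) := by
  have hp : 0 < γ - 1 := sub_pos.2 hγ
  have hmono := strictMonoOn_machSq hp hρ₀
  obtain ⟨ρc, hρc, hMach⟩ := Ico_subset_image_machSq hp hρ₀ ⟨zero_le_one, one_lt_two⟩
  have hlt : ρ₀ < ρc := by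
    rw [← hmono.lt_iff_lt self_mem_Ici hρc, machSq_self, hMach]
    exact one_pos
  refine ⟨ρc, hlt, fun ρ₁ hρ₁ ↦ ?_⟩
  have hsubsonic : downstreamVelocity (γ - 1) ρ₀ ρ₁ ≤ ρ₁ ^ ((γ - 1) / 2) ↔ ρ₁ ≤ ρc := by
    rw [downstreamVelocity_le_rpow_iff _ hρ₀.le hρ₁, ← hmono.le_iff_le hρ₁.le hρc, hMach]
  exact ⟨hsubsonic.2, fun h ↦ lt_of_not_ge (mt hsubsonic.1 h.not_ge)⟩
end

section
/- Let γ > 1, 0 < ρ₀ < ρ₁, and v₁ > 0 satisfy the Bernoulli compatibility ρ₁^{γ−1} = ρ₀^{γ−1} − (γ−1)(½v₁² − v₁ξ₁⁰), where ξ₁⁰ = ρ₁v₁/(ρ₁ − ρ₀). Then there exists a unique pair (ξ̄₁, ρ₂) with ξ̄₁ < 0 and ρ₂ > ρ₁ such that the normal reflection configuration holds: (i) ρ₂^{γ−1} = ρ₀^{γ−1} − (γ−1)v₁(ξ̄₁ − ξ₁⁰) (Bernoulli relation for the rest state (2) with pseudo-potential φ₂(ξ) = −½|ξ|² + v₁(ξ̄₁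 − ξ₁⁰), which agrees with φ₁ on {ξ₁ = ξ̄₁}); and (ii) the Rankine–Hugoniot mass-flux condition ρ₁(v₁ − ξ̄₁) = ρ₂(−ξ̄₁) across the flat reflected shock {ξ₁ = ξ̄₁}. -/
/-!
The mass-flux condition expresses the shock position through the density behind it,
`ξ̄₁ = -ρ₁ v₁ / (ρ₂ - ρ₁)`, which is negative because `ρ₂ > ρ₁`. Substituting this into the
Bernoulli relation leaves one equation `h ρ₂ - c / (ρ₂ - ρ₁) = const` with `c > 0`, where
`h ρ = ρ ^ (γ - 1)` or, more generally, any continuous nondecreasing function tending to `+∞`. Its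
left side increases strictly from `-∞` (as `ρ₂ ↓ ρ₁`) to `+∞` (as `ρ₂ → ∞`), so it takes every
value exactly once.
-/

open Filter Set Topology

section OrderedField

variable {𝕜 : Type*} [Field 𝕜] [LinearOrder 𝕜] [IsStrictOrderedRing 𝕜] {h : 𝕜 → 𝕜} {a c : 𝕜}

theorem strictMonoOn_sub_div_sub (hc : 0 < c) (hmono : MonotoneOn h (Ioi a)) :
    StrictMonoOn (fun r ↦ h r - c / (r - a)) (Ioi a) := by
  intro r hr s hs hrs
  have hdiv : c / (s - a) < c / (r - a) :=
    div_lt_div_of_pos_left hc (sub_pos.2 hr) (sub_lt_sub_right hrs a)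
  linarith [hmono hr hs hrs.le]

variable [TopologicalSpace 𝕜] [OrderTopology 𝕜]

theorem tendsto_sub_div_sub_atTop (c a : 𝕜) (htop : Tendsto h atTop atTop) :
    Tendsto (fun r ↦ h r - c / (r - a)) atTop atTop := by
  have hsub : Tendsto (fun r ↦ r - a) atTop atTop := by
    simpa only [sub_eq_add_neg, id] using tendsto_atTop_add_const_right _ (-a) tendsto_id
  simpa only [sub_eq_add_neg] using htop.atTop_add (hsub.const_div_atTop c).neg

theorem tendsto_sub_div_sub_nhdsGT_atBot {C : 𝕜} (hc : 0 < c) (hle : ∀ᶠ r in 𝓝[>] a, h r ≤ C) :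
    Tendsto (fun r ↦ h r - c / (r - a)) (𝓝[>] a) atBot := by
  have hsub : Tendsto (fun r ↦ r - a) (𝓝[>] a) (𝓝[>] 0) := by
    refine tendsto_nhdsWithin_iff.2 ⟨?_, eventually_mem_nhdsWithin.mono fun r hr ↦ sub_pos.2 hr⟩
    exact ((continuous_sub_right a).tendsto' a 0 (sub_self a)).mono_left nhdsWithin_le_nhds
  have hdiv : Tendsto (fun r ↦ c / (r - a)) (𝓝[>] a) atTop := by
    simpa only [div_eq_mul_inv, Function.comp_def] using
      (tendsto_inv_nhdsGT_zero.comp hsub).const_mul_atTop hc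
  simpa only [sub_eq_add_neg, Function.comp_def] using
    tendsto_atBot_add_left_of_ge' _ C hle (tendsto_neg_atTop_atBot.comp hdiv)

end OrderedField

theorem bijOn_sub_div_sub_Ioi_univ {h : ℝ → ℝ} {a c : ℝ} (hc : 0 < c)
    (hcont : ContinuousOn h (Ioi a)) (hmono : MonotoneOn h (Ioi a))
    (htop : Tendsto h atTop atTop) :
    BijOn (fun r ↦ h r - c / (r - a)) (Ioi a) univ := by
  refine ⟨mapsTo_univ _ _, (strictMonoOn_sub_div_sub hc hmono).injOn, ?_⟩
  have hcont' : ContinuousOn (fun r ↦ h r - c / (r - a)) (Ioi a) :=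
    hcont.sub (continuousOn_const.div (by fun_prop) fun r hr ↦ sub_ne_zero.2 (ne_of_gt hr))
  have hle : ∀ᶠ r in 𝓝[>] a, h r ≤ h (a + 1) := by
    filter_upwards [Ioc_mem_nhdsGT (lt_add_one a)] with r hr
    exact hmono hr.1 (lt_add_one a) hr.2
  exact hcont'.surjOn_of_tendsto nonempty_Ioi
    ((tendsto_comp_coe_Ioi_atBot).2 (tendsto_sub_div_sub_nhdsGT_atBot hc hle))
    (tendsto_comp_val_Ioi_atTop.2 (tendsto_sub_div_sub_atTop c a htop))

theorem massFlux_eq_iff {K : Type*} [Field K] {ρ₁ ρ₂ v₁ ξ : K} (hρ : ρ₂ ≠ ρ₁) :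
    ρ₁ * (v₁ - ξ) = ρ₂ * (-ξ) ↔ ξ = -(ρ₁ * v₁ / (ρ₂ - ρ₁)) := by
  rw [← neg_div, eq_div_iff (sub_ne_zero.2 hρ)]
  constructor <;> intro H <;> linear_combination H

/-- `h` is a multiple `k` of the enthalpy of a general barotropic gas and `m = k * v₁`; the power
law is `h ρ = ρ ^ (γ - 1)` with `k = γ - 1`. -/
theorem normalReflection_iff {𝕜 : Type*} [Field 𝕜] [LinearOrder 𝕜] [IsStrictOrderedRing 𝕜]
    {h : 𝕜 → 𝕜} {ρ₁ ρ₂ v₁ ξ m B ξ₀ : 𝕜} (hρ₁ : 0 < ρ₁) (hv₁ : 0 < v₁) :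
    (ξ < 0 ∧ ρ₁ < ρ₂ ∧ h ρ₂ = B - m * (ξ - ξ₀) ∧ ρ₁ * (v₁ - ξ) = ρ₂ * (-ξ)) ↔
      ρ₁ < ρ₂ ∧ ξ = -(ρ₁ * v₁ / (ρ₂ - ρ₁)) ∧
        h ρ₂ - m * (ρ₁ * v₁) / (ρ₂ - ρ₁) = B + m * ξ₀ := by
  rw [mul_div_assoc m]
  constructor
  · rintro ⟨-, hρ, hbernoulli, hflux⟩
    have hξ := (massFlux_eq_iff hρ.ne').1 hflux
    exact ⟨hρ, hξ, by linear_combination hbernoulli - m * hξ⟩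
  · rintro ⟨hρ, hξ, hreduced⟩
    have hneg : ξ < 0 := hξ ▸ neg_neg_of_pos (div_pos (mul_pos hρ₁ hv₁) (sub_pos.2 hρ))
    exact ⟨hneg, hρ, by linear_combination hreduced + m * hξ, (massFlux_eq_iff hρ.ne').2 hξ⟩

theorem statement13_general {h : ℝ → ℝ} {ρ₁ v₁ m : ℝ} (hρ₁ : 0 < ρ₁) (hv₁ : 0 < v₁) (hm : 0 < m)
    (hcont : ContinuousOn h (Ioi ρ₁)) (hmono : MonotoneOn h (Ioi ρ₁))
    (htop : Tendsto h atTop atTop) (B ξ₀ : ℝ) :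
    ∃! p : ℝ × ℝ, p.1 < 0 ∧ ρ₁ < p.2 ∧ h p.2 = B - m * (p.1 - ξ₀) ∧
      ρ₁ * (v₁ - p.1) = p.2 * (-p.1) := by
  simp only [normalReflection_iff hρ₁ hv₁]
  have hbij := bijOn_sub_div_sub_Ioi_univ (mul_pos hm (mul_pos hρ₁ hv₁)) hcont hmono htop
  obtain ⟨ρ₂, hρ₂, hreduced⟩ := hbij.surjOn (mem_univ (B + m * ξ₀))
  refine ⟨(-(ρ₁ * v₁ / (ρ₂ - ρ₁)), ρ₂), ⟨hρ₂, rfl, hreduced⟩, ?_⟩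
  rintro ⟨ξ, r⟩ ⟨hr, hξ, hr_reduced⟩
  obtain rfl : r = ρ₂ := hbij.injOn hr hρ₂ (hr_reduced.trans hreduced.symm)
  exact Prod.ext hξ rfl

/-- Normal reflection: given `γ > 1`, `0 < ρ₀ < ρ₁`, `v₁ > 0` with the
Bernoulli compatibility `ρ₁^{γ−1} = ρ₀^{γ−1} − (γ−1)(½v₁² − v₁ξ₁⁰)`, `ξ₁⁰ = ρ₁v₁/(ρ₁−ρ₀)`,
there is a unique pair `(ξ̄₁, ρ₂)` with `ξ̄₁ < 0`, `ρ₂ > ρ₁`, the Bernoulli relation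
`ρ₂^{γ−1} = ρ₀^{γ−1} − (γ−1)v₁(ξ̄₁ − ξ₁⁰)`, and the Rankine–Hugoniot mass-flux condition
`ρ₁(v₁ − ξ̄₁) = ρ₂(−ξ̄₁)` across the flat reflected shock `{ξ₁ = ξ̄₁}`. -/
theorem statement13 (γ ρ₀ ρ₁ v₁ : ℝ) (hγ : 1 < γ) (h0 : 0 < ρ₀) (h01 : ρ₀ < ρ₁)
    (hv : 0 < v₁)
    (hBern : ρ₁ ^ (γ - 1)
      = ρ₀ ^ (γ - 1) - (γ - 1) * ((1 / 2) * v₁ ^ 2 - v₁ * (ρ₁ * v₁ / (ρ₁ - ρ₀)))) :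
    ∃! p : ℝ × ℝ, p.1 < 0 ∧ ρ₁ < p.2 ∧
      p.2 ^ (γ - 1) = ρ₀ ^ (γ - 1) - (γ - 1) * v₁ * (p.1 - ρ₁ * v₁ / (ρ₁ - ρ₀)) ∧
      ρ₁ * (v₁ - p.1) = p.2 * (-p.1) := by
  have ha : 0 < γ - 1 := sub_pos.2 hγ
  have hρ₁ : 0 < ρ₁ := h0.trans h01
  exact statement13_general hρ₁ hv (mul_pos ha hv) (Real.continuous_rpow_const ha.le).continuousOn
    ((Real.monotoneOn_rpow_Ici_of_exponent_nonneg ha.le).mono fun _ hρ ↦ (hρ₁.trans hρ).le)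
    (tendsto_rpow_atTop ha) (ρ₀ ^ (γ - 1)) (ρ₁ * v₁ / (ρ₁ - ρ₀))
end
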